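/- The modular discriminant Δ satisfies the third-order nonlinear ODE: for every τ ∈ ℍ, 36Δ⁴(Δ''')² − 14(18ΔΔ'' − 13(Δ')²)Δ²Δ'Δ''' + 48Δ³(Δ'')³ + 285Δ²(Δ')²(Δ'')² − 468Δ(Δ')⁴Δ'' + 169(Δ')⁶ + 48Δ⁷ = 0. -/

import Mathlib

open Complex

noncomputable section

/-- The normalized derivative `F' = (2πi)⁻¹ dF/dτ`. -/
def nderiv (F : ℂ → ℂ) : ℂ → ℂ := fun τ => (2 * Real.pi * Complex.I)⁻¹ * deriv F τ

/-- `q = e^{2πiτ}`. -/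
def qq (τ : ℂ) : ℂ := Complex.exp (2 * Real.pi * Complex.I * τ)

/-- The modular discriminant `Δ(τ) = q ∏_{n≥1} (1 − qⁿ)²⁴`. -/
def Δ : ℂ → ℂ := fun τ => qq τ * ∏' n : ℕ, (1 - qq τ ^ (n + 1)) ^ 24

open UpperHalfPlane hiding I
open Real Filter ModularForm EisensteinSeries Derivative
open scoped Manifold MatrixGroups ModularForm Topology

/-!
Write `P = E2`, `Q = E₄`, `R = E₆`. Ramanujan's equations `P' = (P² - Q) / 12`, `Q' = (P Q - R) / 3`
together with `Δ' = P Δ` make each `Δ⁽ʲ⁾ / Δ` a polynomial in `P`, `Q`, `R`. Inverting the first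
three of these polynomials expresses `Q` and `R` through `Δ, Δ', Δ'', Δ'''`, and the differential
equation is the relation `1728 Δ = Q³ - R²` in these terms.

Ramanujan's equations hold because the Serre derivatives `P' - P² / 12` and `Q' - P Q / 3` are
modular of weight 4 and 6, and a level one form of weight below 12 is determined by its value at
`i∞`: the difference with a multiple of an Eisenstein series is a cusp form, hence zero.
-/

lemma nderiv_coe_eq_normalizedDerivOfComplex {G : ℂ → ℂ} {F : ℍ → ℂ} (h : ∀ z : ℍ, G z = F z)
    (z : ℍ) : nderiv G z = D F z := by
  have hGF : G =ᶠ[𝓝 (z : ℂ)] F ∘ ofComplex := by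
    filter_upwards [isOpen_upperHalfPlaneSet.mem_nhds z.im_pos] with w hw
    rw [Function.comp_apply, ofComplex_apply_of_im_pos hw, ← h]
  rw [nderiv, normalizedDerivOfComplex, hGF.deriv_eq]

lemma norm_normalizedDerivOfComplex_le {F : ℍ → ℂ} (hF : MDiff F) {z : ℍ} {M : ℝ}
    (hM : ∀ w : ℍ, z.im / 2 ≤ w.im → ‖F w‖ ≤ M) : ‖D F z‖ ≤ M / (π * z.im) := by
  have hz := z.im_pos
  have im_ge : ∀ w ∈ Metric.closedBall (z : ℂ) (z.im / 2), z.im / 2 ≤ w.im := by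
    intro w hw
    have h := (Complex.abs_im_le_norm (w - z)).trans (mem_closedBall_iff_norm.mp hw)
    rw [Complex.sub_im, coe_im] at h
    linarith [(abs_le.mp h).1]
  have im_pos : ∀ w ∈ Metric.closedBall (z : ℂ) (z.im / 2), 0 < w.im :=
    fun w hw ↦ (half_pos hz).trans_le (im_ge w hw)
  have hcauchy : ‖deriv (F ∘ ofComplex) z‖ ≤ M / (z.im / 2) := by
    refine norm_deriv_le_of_forall_mem_sphere_norm_le (half_pos hz) ?_ fun w hw ↦ ?_
    · exact ((UpperHalfPlane.mdifferentiable_iff.mp hF).mono fun w hw ↦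
        im_pos w (Metric.closure_ball_subset_closedBall hw)).diffContOnCl
    · have hw' := Metric.sphere_subset_closedBall hw
      rw [Function.comp_apply, ofComplex_apply_of_im_pos (im_pos w hw')]
      exact hM _ (im_ge w hw')
  calc ‖D F z‖ = (2 * π)⁻¹ * ‖deriv (F ∘ ofComplex) z‖ := by
        simp [normalizedDerivOfComplex, abs_of_pos pi_pos]
    _ ≤ (2 * π)⁻¹ * (M / (z.im / 2)) := by gcongr
    _ = M / (π * z.im) := by field_simp

lemma isZeroAtImInfty_normalizedDerivOfComplex {F : ℍ → ℂ} (hF : MDiff F)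
    (hb : IsBoundedAtImInfty F) : IsZeroAtImInfty (D F) := by
  obtain ⟨M, A, hM⟩ := isBoundedAtImInfty_iff.mp hb
  have him : Tendsto UpperHalfPlane.im atImInfty atTop := tendsto_comap
  refine squeeze_zero_norm' ?_ ((him.const_mul_atTop pi_pos).const_div_atTop M)
  filter_upwards [him.eventually_ge_atTop (2 * A)] with z hz
  exact norm_normalizedDerivOfComplex_le hF fun w hw ↦ hM w (by linarith)

lemma tendsto_atImInfty_of_hasSum_qExpansion {h : ℝ} (hh : 0 < h) {F : ℍ → ℂ} {c : ℕ → ℂ}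
    (hF : ∀ z : ℍ, HasSum (fun m ↦ c m • Function.Periodic.qParam h z ^ m) (F z)) :
    Tendsto F atImInfty (𝓝 (c 0)) := by
  let q (z : ℍ) : ℂ := Function.Periodic.qParam h z
  have hq (z : ℍ) : q z ≠ 0 := Function.Periodic.qParam_ne_zero _
  have htail (z : ℍ) : HasSum (fun m ↦ c (m + 1) • q z ^ m) ((F z - c 0) / q z) := by
    have h1 := ((hasSum_nat_add_iff' 1).mpr (hF z)).div_const (q z)
    simpa [pow_succ, ← mul_assoc, mul_div_cancel_right₀ _ (hq z), q] using h1
  have hbdd : IsBoundedAtImInfty fun z ↦ (F z - c 0) / q z :=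
    isBoundedAtImInfty_of_hasSum_qExpansion hh htail
  have hzero : Tendsto (fun z ↦ (F z - c 0) / q z * q z) atImInfty (𝓝 0) :=
    hbdd.mul_zeroAtFilter (qParam_tendsto_atImInfty hh)
  exact tendsto_sub_nhds_zero_iff.mp (hzero.congr fun z ↦ div_mul_cancel₀ _ (hq z))

lemma tendsto_E2_atImInfty : Tendsto E2 atImInfty (𝓝 1) := by
  refine tendsto_atImInfty_of_hasSum_qExpansion one_pos
    (c := fun m ↦ if m = 0 then 1 else -24 * ArithmeticFunction.sigma 1 m) fun z ↦ ?_
  simpa only [Function.Periodic.qParam, ofReal_one, div_one] using hasSum_qExpansion_E2 (z := z)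

lemma tendsto_coe_modularForm_atImInfty {k : ℤ} (f : ModularForm 𝒮ℒ k) :
    Tendsto f atImInfty (𝓝 ((qExpansion 1 f).coeff 0)) :=
  tendsto_atImInfty_of_hasSum_qExpansion one_pos
    (ModularForm.hasSum_qExpansion f one_pos one_mem_strictPeriods_SL)

lemma tendsto_E_atImInfty {k : ℕ} (hk : 3 ≤ k) (hk2 : Even k) :
    Tendsto (E hk) atImInfty (𝓝 1) := by
  simpa only [E_qExpansion_coeff_zero hk hk2] using tendsto_coe_modularForm_atImInfty (E hk)

lemma tendsto_serreDerivative_atImInfty (k : ℂ) {F : ℍ → ℂ} {c : ℂ} (hF : MDiff F)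
    (hlim : Tendsto F atImInfty (𝓝 c)) :
    Tendsto (serreDerivative k F) atImInfty (𝓝 (-(k / 12) * c)) := by
  have hD : Tendsto (D F) atImInfty (𝓝 0) :=
    isZeroAtImInfty_normalizedDerivOfComplex hF (hlim.isBigO_one ℝ)
  have hlim' := hD.sub ((tendsto_E2_atImInfty.const_mul (k * 12⁻¹)).mul hlim)
  rwa [mul_one, zero_sub, ← neg_mul, ← div_eq_mul_inv] at hlim'

lemma eq_zero_of_slash_eq_of_isZeroAtImInfty {k : ℤ} (hk : k < 12) {F : ℍ → ℂ} (hF : MDiff F)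
    (hslash : ∀ γ : SL(2, ℤ), F ∣[k] γ = F) (hzero : IsZeroAtImInfty F) : F = 0 := by
  let f : CuspForm 𝒮ℒ k :=
    { toFun := F
      slash_action_eq' := fun _ ⟨γ, hγ⟩ ↦ hγ ▸ hslash γ
      holo' := hF
      zero_at_cusps' := fun {c} hc ↦ by
        rw [Subgroup.IsArithmetic.isCusp_iff_isCusp_SL2Z] at hc
        exact (OnePoint.isZeroAt_iff_forall_SL2Z hc).mpr fun γ _ ↦ (hslash γ).symm ▸ hzero }
  have hf : f = 0 := rank_zero_iff_forall_zero.mp (CuspForm.rank_eq_zero_of_weight_lt_twelve hk) f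
  exact congrArg DFunLike.coe hf

lemma coe_modularForm_slash {k : ℤ} (f : ModularForm 𝒮ℒ k) (γ : SL(2, ℤ)) :
    (f : ℍ → ℂ) ∣[k] γ = f :=
  f.slash_action_eq' _ ⟨γ, rfl⟩

lemma eq_smul_E_of_slash_eq_of_tendsto {k : ℕ} (hk : 3 ≤ k) (hk2 : Even k) (hk12 : k < 12)
    {F : ℍ → ℂ} {c : ℂ} (hF : MDiff F) (hslash : ∀ γ : SL(2, ℤ), F ∣[(k : ℤ)] γ = F)
    (hlim : Tendsto F atImInfty (𝓝 c)) : F = c • ⇑(E hk) := by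
  refine sub_eq_zero.mp <| eq_zero_of_slash_eq_of_isZeroAtImInfty (k := k) (mod_cast hk12)
    (hF.sub ((E hk).holo'.const_smul c)) (fun γ ↦ ?_) ?_
  · rw [sub_eq_add_neg, SlashAction.add_slash, SlashAction.neg_slash, ModularForm.SL_smul_slash,
      hslash, coe_modularForm_slash]
  · simpa using! hlim.sub ((tendsto_E_atImInfty hk hk2).const_smul c)

lemma serreDerivative_E {k : ℕ} (hk : 3 ≤ k) (hk2 : Even k) (hk12 : k + 2 < 12) :
    serreDerivative k (E hk) = -(k / 12 : ℂ) • ⇑(E (hk.trans (k.le_add_right 2))) := by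
  refine eq_smul_E_of_slash_eq_of_tendsto _ (hk2.add even_two) hk12
    (serreDerivative_mdifferentiable k (E hk).holo') (fun γ ↦ ?_) ?_
  · exact mod_cast serreDerivative_slash_invariant (k := k) (E hk).holo'
      (coe_modularForm_slash (E hk) γ)
  · simpa using tendsto_serreDerivative_atImInfty k (E hk).holo' (tendsto_E_atImInfty hk hk2)

lemma hasDerivAt_D2_comp_ofComplex (γ : SL(2, ℤ)) (z : ℍ) :
    HasDerivAt (D2 γ ∘ ofComplex) (-(2 * π * I)⁻¹ * D2 γ z ^ 2) z := by
  have hD2 : D2 γ ∘ ofComplex =ᶠ[𝓝 (z : ℂ)] fun w ↦ (2 * π * I * γ 1 0) * denom γ w ^ (-1 : ℤ) := by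
    filter_upwards [isOpen_upperHalfPlaneSet.mem_nhds z.im_pos] with w hw
    rw [Function.comp_apply, ofComplex_apply_of_im_pos hw, D2, zpow_neg_one, div_eq_mul_inv]
  refine (((hasDerivAt_denom_zpow γ (-1) z).const_mul _).congr_deriv ?_).congr_of_eventuallyEq hD2
  have hdenom := denom_ne_zero γ z
  have hπ : (π : ℂ) ≠ 0 := mod_cast pi_ne_zero
  simp only [D2, show (-1 - 1 : ℤ) = -2 by rfl, zpow_neg, zpow_ofNat, Int.cast_neg, Int.cast_one,
    Matrix.SpecialLinearGroup.coe_GL_coe_matrix, Matrix.SpecialLinearGroup.map_apply_coe,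
    RingHom.mapMatrix_apply, Int.coe_castRingHom, Matrix.map_apply, ofReal_intCast]
  field_simp

lemma mdifferentiable_D2 (γ : SL(2, ℤ)) : MDiff (D2 γ) :=
  UpperHalfPlane.mdifferentiable_iff.mpr fun w hw ↦
    (hasDerivAt_D2_comp_ofComplex γ ⟨w, hw⟩).differentiableAt.differentiableWithinAt

lemma normalizedDerivOfComplex_D2 (γ : SL(2, ℤ)) :
    D (D2 γ) = (4 * π ^ 2 : ℂ)⁻¹ • (D2 γ * D2 γ) := by
  ext z
  rw [normalizedDerivOfComplex, (hasDerivAt_D2_comp_ofComplex γ z).deriv, Pi.smul_apply,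
    Pi.mul_apply, smul_eq_mul]
  have hπ : (π : ℂ) ≠ 0 := mod_cast pi_ne_zero
  field_simp
  rw [I_sq]
  ring

lemma E2_slash_eq_sub_smul_D2 (γ : SL(2, ℤ)) :
    E2 ∣[(2 : ℤ)] γ = E2 - (3 / π ^ 2 : ℂ) • D2 γ := by
  rw [E2_slash_action, riemannZeta_two]
  congr 2
  field_simp
  norm_num

-- Equivariance of the Serre derivative needs its parameter to be the weight `2` of `E2`. The
-- anomalies of `serreDerivative 2 E2` are cancelled by those of the correction `E2 ^ 2 / 12`.
lemma serreDerivative_one_E2_slash (γ : SL(2, ℤ)) :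
    serreDerivative 1 E2 ∣[(4 : ℤ)] γ = serreDerivative 1 E2 := by
  have hsplit : serreDerivative 1 E2 = serreDerivative 2 E2 + (12⁻¹ : ℂ) • (E2 * E2) := by
    ext z
    simp only [serreDerivative_apply, Pi.add_apply, Pi.smul_apply, Pi.mul_apply, smul_eq_mul]
    ring
  have hserre : serreDerivative 2 E2 ∣[(4 : ℤ)] γ = serreDerivative 2 (E2 ∣[(2 : ℤ)] γ) :=
    serreDerivative_slash_equivariant (k := 2) E2_mdifferentiable
  have hsq : (E2 * E2) ∣[(4 : ℤ)] γ = (E2 ∣[(2 : ℤ)] γ) * (E2 ∣[(2 : ℤ)] γ) :=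
    ModularForm.mul_slash_SL2 2 2 γ E2 E2
  rw [hsplit, SlashAction.add_slash, ModularForm.SL_smul_slash, hserre, hsq,
    E2_slash_eq_sub_smul_D2]
  ext z
  have hD : D (E2 - (3 / π ^ 2 : ℂ) • D2 γ) z = D E2 z - 3 / (4 * π ^ 4) * D2 γ z ^ 2 := by
    have hD2 := mdifferentiable_D2 γ
    rw [normalizedDerivOfComplex_sub _ _ E2_mdifferentiable (hD2.const_smul _),
      normalizedDerivOfComplex_smul _ _ hD2, normalizedDerivOfComplex_D2]
    simp only [Pi.sub_apply, Pi.smul_apply, Pi.mul_apply, smul_eq_mul]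
    field_simp
  simp only [serreDerivative_apply, Pi.add_apply, Pi.smul_apply, Pi.sub_apply, Pi.mul_apply,
    smul_eq_mul, hD]
  ring

lemma serreDerivative_one_E2 : serreDerivative 1 E2 = -(12⁻¹ : ℂ) • ⇑E₄ := by
  refine eq_smul_E_of_slash_eq_of_tendsto _ (by decide) (by lia)
    (serreDerivative_mdifferentiable 1 E2_mdifferentiable) serreDerivative_one_E2_slash ?_
  simpa using tendsto_serreDerivative_atImInfty 1 E2_mdifferentiable tendsto_E2_atImInfty

lemma normalizedDerivOfComplex_E2 : D E2 = (12⁻¹ : ℂ) • (E2 * E2 - ⇑E₄) := by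
  ext z
  have h := congrFun serreDerivative_one_E2 z
  simp only [serreDerivative_apply, Pi.smul_apply, Pi.sub_apply, Pi.mul_apply, smul_eq_mul] at h ⊢
  linear_combination h

lemma normalizedDerivOfComplex_E₄ : D E₄ = (3⁻¹ : ℂ) • (E2 * ⇑E₄ - ⇑E₆) := by
  ext z
  have h := congrFun (serreDerivative_E (k := 4) (by lia) (by decide) (by lia)) z
  simp only [serreDerivative_apply, Pi.smul_apply, Pi.sub_apply, Pi.mul_apply, smul_eq_mul] at h ⊢
  push_cast at h
  linear_combination h

lemma normalizedDerivOfComplex_discriminant : D discriminant = E2 * discriminant := by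
  ext z
  have hη : nderiv (fun w ↦ ModularForm.eta w ^ 24) z = D discriminant z :=
    nderiv_coe_eq_normalizedDerivOfComplex (F := discriminant) (fun _ ↦ rfl) z
  have hlog : deriv ModularForm.eta z / ModularForm.eta z = π * I / 12 * E2 z :=
    logDeriv_eta_eq_E2 z
  rw [div_eq_iff (eta_ne_zero z.2)] at hlog
  rw [← hη, nderiv, deriv_fun_pow (differentiableAt_eta_of_mem_upperHalfPlaneSet z.2), hlog,
    Pi.mul_apply, discriminant]
  field_simp
  norm_num
  ring

lemma mdifferentiable_discriminant : MDiff discriminant := CuspForm.discriminant.holo'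

lemma normalizedDerivOfComplex_mul_discriminant {F : ℍ → ℂ} (hF : MDiff F) :
    D (F * discriminant) = (D F + F * E2) * discriminant := by
  rw [normalizedDerivOfComplex_mul F _ hF mdifferentiable_discriminant,
    normalizedDerivOfComplex_discriminant]
  ring

lemma normalizedDerivOfComplex₂_discriminant :
    D (D discriminant) = (12⁻¹ : ℂ) • ((13 : ℂ) • E2 ^ 2 - ⇑E₄) * discriminant := by
  rw [normalizedDerivOfComplex_discriminant,
    normalizedDerivOfComplex_mul_discriminant E2_mdifferentiable, normalizedDerivOfComplex_E2]
  ext z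
  simp only [Pi.add_apply, Pi.sub_apply, Pi.mul_apply, Pi.pow_apply, Pi.smul_apply, smul_eq_mul]
  ring

lemma normalizedDerivOfComplex₃_discriminant :
    D (D (D discriminant)) =
      (72⁻¹ : ℂ) • ((91 : ℂ) • E2 ^ 3 - (21 : ℂ) • (E2 * ⇑E₄) + (2 : ℂ) • ⇑E₆) * discriminant := by
  have hsq : MDiff (E2 ^ 2) := E2_mdifferentiable.pow 2
  have hE₄ : MDiff E₄ := E₄.holo'
  have hdiff : MDiff ((13 : ℂ) • E2 ^ 2 - ⇑E₄) := (hsq.const_smul 13).sub hE₄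
  rw [normalizedDerivOfComplex₂_discriminant,
    normalizedDerivOfComplex_mul_discriminant (hdiff.const_smul _),
    normalizedDerivOfComplex_smul _ _ hdiff,
    normalizedDerivOfComplex_sub _ _ (hsq.const_smul 13) hE₄,
    normalizedDerivOfComplex_smul _ _ hsq, normalizedDerivOfComplex_pow _ _ E2_mdifferentiable,
    normalizedDerivOfComplex_E2, normalizedDerivOfComplex_E₄]
  congr 1
  ext z
  simp only [Nat.cast_ofNat, Nat.add_one_sub_one, pow_one, Pi.add_apply, Pi.sub_apply,
    Pi.mul_apply, Pi.pow_apply, Pi.smul_apply, Pi.ofNat_apply, smul_eq_mul]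
  ring

lemma discriminant_sq_mul_E₄ (z : ℍ) : discriminant z ^ 2 * E₄ z =
    13 * D discriminant z ^ 2 - 12 * discriminant z * D (D discriminant) z := by
  rw [normalizedDerivOfComplex₂_discriminant, normalizedDerivOfComplex_discriminant]
  simp only [Pi.sub_apply, Pi.mul_apply, Pi.pow_apply, Pi.smul_apply, smul_eq_mul]
  ring

lemma discriminant_cube_mul_E₆ (z : ℍ) : discriminant z ^ 3 * E₆ z =
    36 * discriminant z ^ 2 * D (D (D discriminant)) z
      - 126 * discriminant z * D discriminant z * D (D discriminant) z
      + 91 * D discriminant z ^ 3 := by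
  rw [normalizedDerivOfComplex₃_discriminant, normalizedDerivOfComplex₂_discriminant,
    normalizedDerivOfComplex_discriminant]
  simp only [Pi.add_apply, Pi.sub_apply, Pi.mul_apply, Pi.pow_apply, Pi.smul_apply, smul_eq_mul]
  ring

lemma Δ_coe_eq_discriminant (z : ℍ) : Δ z = discriminant z := by
  rw [discriminant_eq_q_prod]
  simp [Δ, qq, eta_q, Function.Periodic.qParam]

/-- The modular discriminant satisfies a third-order nonlinear ODE. -/
theorem discriminant_third_order_ODE :
    ∀ τ : ℂ, 0 < τ.im →
      36 * Δ τ ^ 4 * (nderiv (nderiv (nderiv Δ)) τ) ^ 2 -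
      14 * (18 * Δ τ * nderiv (nderiv Δ) τ - 13 * (nderiv Δ τ) ^ 2) * Δ τ ^ 2 *
        nderiv Δ τ * nderiv (nderiv (nderiv Δ)) τ +
      48 * Δ τ ^ 3 * (nderiv (nderiv Δ) τ) ^ 3 +
      285 * Δ τ ^ 2 * (nderiv Δ τ) ^ 2 * (nderiv (nderiv Δ) τ) ^ 2 -
      468 * Δ τ * (nderiv Δ τ) ^ 4 * nderiv (nderiv Δ) τ +
      169 * (nderiv Δ τ) ^ 6 + 48 * Δ τ ^ 7 = 0 := by
  intro τ hτ
  lift τ to ℍ using hτ with z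
  have hD₁ := nderiv_coe_eq_normalizedDerivOfComplex Δ_coe_eq_discriminant
  have hD₂ := nderiv_coe_eq_normalizedDerivOfComplex hD₁
  have hD₃ := nderiv_coe_eq_normalizedDerivOfComplex hD₂
  rw [hD₁, hD₂, hD₃, Δ_coe_eq_discriminant]
  have hE₄E₆ : (discriminant z ^ 2 * E₄ z) ^ 3 - (discriminant z ^ 3 * E₆ z) ^ 2 =
      1728 * discriminant z ^ 7 := by
    linear_combination -1728 * discriminant z ^ 6 * discriminant_eq_E₄_cube_sub_E₆_sq z
  rw [discriminant_sq_mul_E₄, discriminant_cube_mul_E₆] at hE₄E₆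
  linear_combination -(1 / 36) * hE₄E₆
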